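/- Let Â = A + εB be an n×n dual matrix. Then Â has a dual core generalized inverse if and only if there exists a real n×n matrix C that is a core inverse of A (so A has index one) and (Iₙ − A·C)·B·(Iₙ − C·A) = 0. -/

import Mathlib

open Matrix

/-- The dual matrix `A + εB`, viewed as a matrix over the dual numbers `ℝ[ε]`. -/
def dm {n : ℕ} (A B : Matrix (Fin n) (Fin n) ℝ) :
    Matrix (Fin n) (Fin n) (DualNumber ℝ) :=
  fun i j => TrivSqZeroExt.inl (A i j) + TrivSqZeroExt.inr (B i j)

/-- A dual matrix has dual index one iff its column space equals that of its square,
equivalently (as shown in the paper) there is a dual matrix `X` with `M² * X = M`. -/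
def DualIndexOne {n : ℕ} (M : Matrix (Fin n) (Fin n) (DualNumber ℝ)) : Prop :=
  ∃ X : Matrix (Fin n) (Fin n) (DualNumber ℝ), M * M * X = M

/-- `G` is a group inverse of the real matrix `A`. -/
def IsGroupInv {n : ℕ} (A G : Matrix (Fin n) (Fin n) ℝ) : Prop :=
  A * G * A = A ∧ G * A * G = G ∧ A * G = G * A

/-- `X` is the Moore–Penrose inverse of the real matrix `A`. -/
def IsMoorePenrose {n : ℕ} (A X : Matrix (Fin n) (Fin n) ℝ) : Prop :=
  A * X * A = A ∧ X * A * X = X ∧ (A * X)ᵀ = A * X ∧ (X * A)ᵀ = X * A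

/-- `C` is a core inverse of the real matrix `A`. -/
def IsCoreInv {n : ℕ} (A C : Matrix (Fin n) (Fin n) ℝ) : Prop :=
  A * C * A = A ∧ A * (C * C) = C ∧ (A * C)ᵀ = A * C

/-- `G` is a dual group generalized inverse (DGGI) of the dual matrix `M`. -/
def IsDGGI {n : ℕ} (M G : Matrix (Fin n) (Fin n) (DualNumber ℝ)) : Prop :=
  M * G * M = M ∧ G * M * G = G ∧ M * G = G * M

/-- `X` is a dual Moore–Penrose generalized inverse (DMPGI) of the dual matrix `M`. -/
def IsDMPGI {n : ℕ} (M X : Matrix (Fin n) (Fin n) (DualNumber ℝ)) : Prop :=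
  M * X * M = M ∧ X * M * X = X ∧ (M * X)ᵀ = M * X ∧ (X * M)ᵀ = X * M

/-- `G` is a dual core generalized inverse (DCGI) of the dual matrix `M`. -/
def IsDCGI {n : ℕ} (M G : Matrix (Fin n) (Fin n) (DualNumber ℝ)) : Prop :=
  M * G * M = M ∧ M * (G * G) = G ∧ (M * G)ᵀ = M * G


theorem dm_mul {n : ℕ} (A B C D : Matrix (Fin n) (Fin n) ℝ) :
    dm A B * dm C D = dm (A * C) (A * D + B * C) := by
  ext i j
  · simp [dm, Matrix.mul_apply, TrivSqZeroExt.fst_sum]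
  · simp [dm, Matrix.mul_apply, TrivSqZeroExt.snd_sum, Finset.sum_add_distrib, mul_comm]

theorem dm_transpose {n : ℕ} (A B : Matrix (Fin n) (Fin n) ℝ) :
    (dm A B)ᵀ = dm Aᵀ Bᵀ := rfl

theorem dm_inj {n : ℕ} (A B C D : Matrix (Fin n) (Fin n) ℝ) :
    dm A B = dm C D ↔ A = C ∧ B = D := by
  constructor
  · intro h
    constructor
    · ext i j
      have := congrArg TrivSqZeroExt.fst (congrFun (congrFun h i) j)
      simpa [dm] using this
    · ext i j
      have := congrArg TrivSqZeroExt.snd (congrFun (congrFun h i) j)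
      simpa [dm] using this
  · rintro ⟨rfl, rfl⟩; rfl

theorem dm_surj {n : ℕ} (G : Matrix (Fin n) (Fin n) (DualNumber ℝ)) :
    ∃ C D, G = dm C D := by
  refine ⟨fun i j => (G i j).fst, fun i j => (G i j).snd, ?_⟩
  ext i j <;> simp [dm]

theorem core_cac {n : ℕ} (A C : Matrix (Fin n) (Fin n) ℝ)
    (h1 : A * C * A = A) (h2 : A * (C * C) = C) : C * A * C = C := by
  have e : (A + (1 - A * C)) * ((C + (1 - A * C)) * (1 - A * (1 - A * C))) = 1 := by
    have e1 : (A + (1 - A * C)) * (C + (1 - A * C)) = 1 + A * (1 - A * C) := by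
      have : (A + (1 - A * C)) * (C + (1 - A * C)) = 1 + A * (1 - A * C)
          + (C - A * (C * C)) + (A * C * A - A) * C := by noncomm_ring
      rw [this, h1, h2]; simp
    rw [← mul_assoc, e1]
    have : (1 + A * (1 - A * C)) * (1 - A * (1 - A * C)) =
      1 - A * (A - A * C * A) * (1 - A * C) := by noncomm_ring
    rw [this, h1]; simp
  have e' := mul_eq_one_comm.mp e
  have z : (A + (1 - A * C)) * (C * A * C - C) = 0 := by
    have : (A + (1 - A * C)) * (C * A * C - C) =
      (A * C * A - A) * C + (C - A * (C * C)) * (A * C - 1) := by noncomm_ring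
    rw [this, h1, h2]; simp
  have := congrArg (fun Z => ((C + (1 - A * C)) * (1 - A * (1 - A * C))) * Z) z
  simp only [← mul_assoc] at this e'
  rw [e'] at this
  simpa [sub_eq_zero] using this

theorem stmt11 {n : ℕ} (A B : Matrix (Fin n) (Fin n) ℝ) :
    (∃ G : Matrix (Fin n) (Fin n) (DualNumber ℝ), IsDCGI (dm A B) G) ↔
      ∃ C : Matrix (Fin n) (Fin n) ℝ, IsCoreInv A C ∧
        (1 - A * C) * B * (1 - C * A) = 0 := by
  constructor
  · rintro ⟨G, hG⟩
    obtain ⟨C, D, rfl⟩ := dm_surj G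
    simp only [IsDCGI, dm_mul, dm_transpose, dm_inj] at hG
    obtain ⟨⟨h1, k1⟩, ⟨h2, k2⟩, h3, k3⟩ := hG
    refine ⟨C, ⟨h1, h2, h3⟩, ?_⟩
    have : (1 - A * C) * B * (1 - C * A) =
      (1 - A * C) * (B - (A * C * B + (A * D + B * C) * A)) * (1 - C * A)
      + (A - A * C * A) * (C * B + D * A) * (1 - C * A)
      + (1 - A * C) * B * C * (A - A * C * A) := by noncomm_ring
    rw [this, k1, h1]; simp
  · rintro ⟨C, ⟨h1, h2, h3⟩, hB⟩
    have h4 := core_cac A C h1 h2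
    obtain ⟨X, hX⟩ : ∃ X, X = (1 - A * C) * B * C := ⟨_, rfl⟩
    have x1 : A * C * X = 0 := by
      have : A * C * X = (A - A * C * A) * C * B * C := by rw [hX]; noncomm_ring
      rw [this, h1]; simp
    have x2 : X * (A * C) = X := by
      have : X * (A * C) = (1 - A * C) * B * (C * A * C) := by rw [hX]; noncomm_ring
      rw [this, h4, hX]
    have x3 : Xᵀ * (A * C) = 0 := by
      have := congrArg Matrix.transpose x1
      rwa [transpose_mul, h3, transpose_zero] at this
    have x4 : A * C * Xᵀ = Xᵀ := by
      have := congrArg Matrix.transpose x2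
      rwa [transpose_mul, h3] at this
    have x5 : Xᵀ * A = 0 := by
      rw [← h1, ← mul_assoc, x3, zero_mul]
    have x6 : Xᵀ * C = 0 := by
      rw [← h2, ← mul_assoc, x5, zero_mul]
    obtain ⟨D, hD⟩ : ∃ D, D = X * C + C * Xᵀ - C * B * C - C * A * X * C := ⟨_, rfl⟩
    have d3 : A * D + B * C = X + Xᵀ := by
      have : A * D + B * C = (A - A * C * A) * X * C + A * C * Xᵀ + (1 - A * C) * B * C := by
        rw [hD]; noncomm_ring
      rw [this, h1, x4, ← hX]; simp [add_comm]
    refine ⟨dm C D, ?_⟩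
    simp only [IsDCGI, dm_mul, dm_transpose, dm_inj]
    refine ⟨⟨h1, ?_⟩, ⟨h2, ?_⟩, h3, ?_⟩
    · rw [d3, add_mul, x5, add_zero, hX]
      have : A * C * B + (1 - A * C) * B * C * A = B - (1 - A * C) * B * (1 - C * A) := by
        noncomm_ring
      rw [this, hB, sub_zero]
    · have : A * (C * D + D * C) + B * (C * C) = A * C * D + (A * D + B * C) * C := by
        noncomm_ring
      rw [this, d3, add_mul, x6]
      have : A * C * D = A * C * X * C + A * (C * C) * (Xᵀ - B * C - A * X * C) := by
        rw [hD]; noncomm_ring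
      rw [this, x1, h2, hD]; noncomm_ring
    · rw [d3, transpose_add, transpose_transpose, add_comm]
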